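/- There exists a perfect (6,4) linear code over G_{2+i} correcting all errors of Mannheim weight 1: namely, the null space C = {x ∈ G_{2+i}^6 : Hxᵀ = 0} of the parity check matrix H = [[1, 0, 1, 1, i, 1], [0, 1, 1, −1, 1, i]] over G_{2+i} is a subgroup of cardinality 5⁴ with index 5² = 25, and the 4·6 + 1 = 25 vectors of G_{2+i}^6 of Mannheim weight at most 1 lie in pairwise distinct cosets of C; in particular C corrects all errors of Mannheim weight 1 and attains the sphere-packing bound 5^{6−4} = 4·6 + 1 with equality. -/

import Mathlib

/-!
Every nonzero class modulo `2 + i` contains one of the units `±1, ±i`, so over `G_{2+i}` the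
Mannheim weight of a vector is its Hamming weight, and the ball of radius 1 in `G_{2+i}⁶` has
`1 + 6 · 4 = 25` elements. No `2 × 2` minor of `H` vanishes modulo `2 + i`, so a nonzero codeword
has at least three nonzero entries and the vectors of this ball lie in distinct cosets. Hence the
index of the code is at least 25; it is at most `5² = 25`, the number of syndromes.
-/

/-- The Mannheim weight of a residue class `x ∈ G_π = ℤ[i]/(π)`: the least value
of `|a| + |b|` over all Gaussian integers `a + bi` in the class `x`. -/
noncomputable def mWt (π : GaussianInt) (x : GaussianInt ⧸ Ideal.span {π}) : ℕ :=
  sInf {m | ∃ a b : ℤ, Ideal.Quotient.mk (Ideal.span {π}) ⟨a, b⟩ = x ∧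
    m = a.natAbs + b.natAbs}

/-- The Mannheim weight of a vector over `G_π` is the sum of the Mannheim
weights of its components. -/
noncomputable def mWtVec (π : GaussianInt) {n : ℕ}
    (v : Fin n → GaussianInt ⧸ Ideal.span {π}) : ℕ :=
  ∑ i, mWt π (v i)

/-- A code `C ⊆ G_π^n` corrects all errors of Mannheim weight `t` or less:
any two distinct vectors of Mannheim weight at most `t` lie in distinct cosets of `C`. -/
def CorrectsM (π : GaussianInt) {n : ℕ}
    (C : AddSubgroup (Fin n → GaussianInt ⧸ Ideal.span {π})) (t : ℕ) : Prop :=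
  ∀ u v : Fin n → GaussianInt ⧸ Ideal.span {π},
    mWtVec π u ≤ t → mWtVec π v ≤ t → u - v ∈ C → u = v

/-- The residue class ring `G_{2+i} = ℤ[i]/(2+i)`, which has 5 elements. -/
abbrev Gq : Type := GaussianInt ⧸ Ideal.span {(⟨2, 1⟩ : GaussianInt)}

/-- The class of `i` in `G_{2+i}`. -/
noncomputable def iq : Gq :=
  Ideal.Quotient.mk (Ideal.span {(⟨2, 1⟩ : GaussianInt)}) ⟨0, 1⟩

/-- The parity check matrix `H = [[1, 0, 1, 1, i, 1], [0, 1, 1, −1, 1, i]]`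
over `G_{2+i}`. -/
noncomputable def pcMatrix : Matrix (Fin 2) (Fin 6) Gq :=
  !![1, 0, 1, 1, iq, 1; 0, 1, 1, -1, 1, iq]

/-- The null space `C = {x : H xᵀ = 0}` of the parity check matrix, as an
additive subgroup of `G_{2+i}^6`. -/
noncomputable def nullCode : AddSubgroup (Fin 6 → Gq) :=
  (LinearMap.ker pcMatrix.mulVecLin).toAddSubgroup

section HammingWeight

open Finset

variable {ι R : Type*} [Fintype ι] [DecidableEq R]

lemma card_filter_support_eq [DecidableEq ι] [Fintype R] [Zero R] (s : Finset ι) :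
    #{v : ι → R | ({i | v i ≠ 0} : Finset ι) = s} = (Fintype.card R - 1) ^ #s := by
  have hpi : ({v : ι → R | ({i | v i ≠ 0} : Finset ι) = s} : Finset (ι → R)) =
      Fintype.piFinset fun i ↦ if i ∈ s then univ.erase 0 else {0} := by
    ext v
    simp only [mem_filter_univ, Finset.ext_iff, Fintype.mem_piFinset]
    refine forall_congr' fun i ↦ ?_
    by_cases hi : i ∈ s <;> simp [hi]
  rw [hpi, Fintype.card_piFinset, ← prod_subset s.subset_univ fun i _ hi ↦ by simp [hi]]
  exact prod_eq_pow_card fun i hi ↦ by simp [hi]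

lemma card_hammingNorm_eq [DecidableEq ι] [Fintype R] [Zero R] (w : ℕ) :
    #{v : ι → R | hammingNorm v = w} = (Fintype.card ι).choose w * (Fintype.card R - 1) ^ w := by
  have hfiber : ∀ s ∈ powersetCard w (univ : Finset ι),
      #{v ∈ ({v : ι → R | hammingNorm v = w} : Finset (ι → R)) |
        ({i | v i ≠ 0} : Finset ι) = s} = (Fintype.card R - 1) ^ w := by
    intro s hs
    obtain rfl : #s = w := mem_powersetCard_univ.1 hs
    rw [← card_filter_support_eq s, filter_filter]
    congr 1
    ext v
    simp only [mem_filter_univ, and_iff_right_iff_imp]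
    exact congrArg card
  rw [card_eq_sum_card_fiberwise (f := fun v ↦ ({i | v i ≠ 0} : Finset ι))
      (t := powersetCard w univ) (fun v hv ↦ by simpa [hammingNorm] using hv),
    sum_congr rfl hfiber, sum_const, card_powersetCard, smul_eq_mul, card_univ]

theorem card_hammingNorm_le [Finite R] [Zero R] (t : ℕ) :
    Nat.card {v : ι → R // hammingNorm v ≤ t} =
      ∑ w ∈ range (t + 1), (Fintype.card ι).choose w * (Nat.card R - 1) ^ w := by
  classical
  have := Fintype.ofFinite R
  rw [Nat.card_eq_fintype_card, Nat.card_eq_fintype_card, Fintype.card_subtype,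
    card_eq_sum_card_fiberwise (f := hammingNorm) (t := range (t + 1))
      (fun v hv ↦ by simpa [Nat.lt_succ_iff] using hv)]
  refine sum_congr rfl fun w hw ↦ ?_
  rw [← card_hammingNorm_eq, filter_filter]
  congr 1
  ext v
  simp only [mem_filter_univ, and_iff_right_iff_imp]
  rintro rfl
  exact Nat.lt_succ_iff.1 (mem_range.1 hw)

theorem card_lt_hammingNorm_of_mulVec_eq_zero {κ : Type*} [Fintype κ] [DecidableEq κ] [CommRing R]
    [NoZeroDivisors R] (hκ : Fintype.card κ ≤ Fintype.card ι) {H : Matrix κ ι R}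
    (hH : ∀ e : κ ↪ ι, (H.submatrix id e).det ≠ 0) {v : ι → R} (hv : H.mulVec v = 0)
    (hv0 : v ≠ 0) : Fintype.card κ < hammingNorm v := by
  classical
  by_contra! hle
  obtain ⟨t, hst, ht⟩ := exists_superset_card_eq hle hκ
  let e : κ ≃ t := Fintype.equivOfCardEq (by simp [ht])
  have hvt : ∀ i ∉ t, v i = 0 := fun i hi ↦ by
    by_contra hvi
    exact hi (hst (by simpa using hvi))
  have hsub : (H.submatrix id fun k ↦ (e k : ι)).mulVec (fun k ↦ v (e k)) = 0 := by
    rw [← hv]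
    ext r
    calc ∑ k, H r (e k) * v (e k) = ∑ i : t, H r i * v i :=
          e.sum_comp fun i : t ↦ H r i * v i
      _ = ∑ i ∈ t, H r i * v i := t.sum_coe_sort fun i ↦ H r i * v i
      _ = ∑ i, H r i * v i :=
          sum_subset t.subset_univ fun i _ hi ↦ by rw [hvt i hi, mul_zero]
  have hve := Matrix.eq_zero_of_mulVec_eq_zero
    (hH (e.toEmbedding.trans (Function.Embedding.subtype _))) hsub
  refine hv0 (funext fun i ↦ ?_)
  by_cases hi : i ∈ t
  · simpa using congrFun hve (e.symm ⟨i, hi⟩)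
  · exact hvt i hi

end HammingWeight

lemma index_ker_le_card {R M N : Type*} [Ring R] [AddCommGroup M] [AddCommGroup N] [Module R M]
    [Module R N] [Finite N] (f : M →ₗ[R] N) :
    (LinearMap.ker f).toAddSubgroup.index ≤ Nat.card N := by
  rw [LinearMap.ker_toAddSubgroup, AddSubgroup.index_ker]
  exact Nat.card_le_card_of_injective _ Subtype.val_injective

section ResidueRing

variable {π : GaussianInt}

lemma intCast_quotient_eq_zero_iff (hπ : IsCoprime π.re π.im) (n : ℤ) :
    (n : GaussianInt ⧸ Ideal.span {π}) = 0 ↔ π.norm ∣ n := by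
  rw [← map_intCast (Ideal.Quotient.mk (Ideal.span {π})) n, Ideal.Quotient.eq_zero_iff_mem,
    Ideal.mem_span_singleton]
  constructor
  · rintro ⟨z, hz⟩
    have hstar : (π.norm : GaussianInt) ∣ n * star π :=
      ⟨z, by rw [hz, Zsqrtd.norm_eq_mul_conj]; ring⟩
    obtain ⟨hre, him⟩ := (Zsqrtd.intCast_dvd _ _).1 hstar
    obtain ⟨a, b, hab⟩ := hπ
    have hn : n = a * (n * π.re) + b * (n * π.im) := by linear_combination -n * hab
    rw [hn]
    exact dvd_add (Dvd.dvd.mul_left (by simpa using hre) a)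
      (Dvd.dvd.mul_left (by simpa using him) b)
  · intro hn
    have hdvd : (π.norm : GaussianInt) ∣ n := (Zsqrtd.intCast_dvd_intCast _ _).2 hn
    exact (Dvd.intro _ (Zsqrtd.norm_eq_mul_conj π).symm).trans hdvd

lemma intCast_quotient_surjective (hπ : IsCoprime π.re π.im) :
    Function.Surjective (Int.cast : ℤ → GaussianInt ⧸ Ideal.span {π}) := by
  intro x
  obtain ⟨z, rfl⟩ := Ideal.Quotient.mk_surjective x
  obtain ⟨a, b, hab⟩ := hπ
  -- `π * (b + a i) = (b π.re - a π.im) + i`, so `i` is congruent to the integer `a π.im - b π.re`.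
  refine ⟨z.re + z.im * (a * π.im - b * π.re), ?_⟩
  rw [← map_intCast (Ideal.Quotient.mk (Ideal.span {π})), Ideal.Quotient.eq,
    Ideal.mem_span_singleton]
  refine ⟨⟨-z.im * b, -z.im * a⟩, ?_⟩
  ext
  · simp only [Zsqrtd.re_sub, Zsqrtd.re_intCast, Zsqrtd.re_mul]
    ring
  · simp only [Zsqrtd.im_sub, Zsqrtd.im_intCast, Zsqrtd.im_mul]
    linear_combination z.im * hab

/-- The isomorphism `ℤ/n ≃ ℤ[i]/(π)` for `π` with coprime real and imaginary part and norm `n`. -/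
noncomputable def zmodEquivQuotient (hπ : IsCoprime π.re π.im) {n : ℕ} (hn : (n : ℤ) = π.norm) :
    ZMod n ≃+* GaussianInt ⧸ Ideal.span {π} :=
  haveI : CharP (GaussianInt ⧸ Ideal.span {π}) n :=
    ⟨fun m ↦ by
      rw [← Int.cast_natCast, intCast_quotient_eq_zero_iff hπ, ← hn, Int.natCast_dvd_natCast]⟩
  RingEquiv.ofBijective (ZMod.castHom dvd_rfl _)
    ⟨ZMod.castHom_injective _, fun x ↦
      let ⟨m, hm⟩ := intCast_quotient_surjective hπ x
      ⟨m, (map_intCast _ m).trans hm⟩⟩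

end ResidueRing

section MannheimWeight

variable {π : GaussianInt}

lemma mWt_mk_le (z : GaussianInt) :
    mWt π (Ideal.Quotient.mk _ z) ≤ z.re.natAbs + z.im.natAbs :=
  Nat.sInf_le ⟨z.re, z.im, rfl, rfl⟩

lemma exists_mk_eq_mWt (x : GaussianInt ⧸ Ideal.span {π}) :
    ∃ z : GaussianInt, Ideal.Quotient.mk _ z = x ∧ mWt π x = z.re.natAbs + z.im.natAbs := by
  obtain ⟨z, hz⟩ := Ideal.Quotient.mk_surjective x
  obtain ⟨a, b, hx, hm⟩ := Nat.sInf_mem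
    (s := {m | ∃ a b : ℤ, Ideal.Quotient.mk (Ideal.span {π}) ⟨a, b⟩ = x ∧
      m = a.natAbs + b.natAbs}) ⟨_, z.re, z.im, hz, rfl⟩
  exact ⟨⟨a, b⟩, hx, hm⟩

lemma mWt_eq_zero_iff {x : GaussianInt ⧸ Ideal.span {π}} : mWt π x = 0 ↔ x = 0 := by
  constructor
  · intro hx
    obtain ⟨z, rfl, hz⟩ := exists_mk_eq_mWt x
    have hz0 : z = 0 :=
      Zsqrtd.ext (Int.natAbs_eq_zero.1 (by omega)) (Int.natAbs_eq_zero.1 (by omega))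
    rw [hz0, map_zero]
  · rintro rfl
    simpa using mWt_mk_le (π := π) 0

variable {n : ℕ} {C : AddSubgroup (Fin n → GaussianInt ⧸ Ideal.span {π})} {t : ℕ}

theorem CorrectsM.card_ball_le_index [C.FiniteIndex] (hC : CorrectsM π C t) :
    Nat.card {v : Fin n → GaussianInt ⧸ Ideal.span {π} // mWtVec π v ≤ t} ≤ C.index := by
  rw [AddSubgroup.index]
  refine Nat.card_le_card_of_injective (fun v ↦ (v.1 : _ ⧸ C)) fun u v huv ↦ ?_
  exact Subtype.ext (hC _ _ u.2 v.2 (QuotientAddGroup.eq_iff_sub_mem.1 huv))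

variable [DecidableEq (GaussianInt ⧸ Ideal.span {π})]

lemma hammingNorm_le_mWtVec (v : Fin n → GaussianInt ⧸ Ideal.span {π}) :
    hammingNorm v ≤ mWtVec π v := by
  rw [hammingNorm, Finset.card_filter, mWtVec]
  refine Finset.sum_le_sum fun i _ ↦ ?_
  split_ifs with hi
  · exact Nat.one_le_iff_ne_zero.2 (mWt_eq_zero_iff.not.2 hi)
  · exact Nat.zero_le _

lemma mWtVec_eq_hammingNorm (hπ : ∀ x, mWt π x ≤ 1) (v : Fin n → GaussianInt ⧸ Ideal.span {π}) :
    mWtVec π v = hammingNorm v := by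
  refine le_antisymm ?_ (hammingNorm_le_mWtVec v)
  rw [hammingNorm, Finset.card_filter, mWtVec]
  refine Finset.sum_le_sum fun i _ ↦ ?_
  split_ifs with hi
  · exact hπ _
  · exact (mWt_eq_zero_iff.2 (not_not.1 hi)).le

theorem correctsM_of_two_mul_lt_hammingNorm
    (hC : ∀ v ∈ C, v ≠ 0 → 2 * t < hammingNorm v) : CorrectsM π C t := by
  intro u v hu hv huv
  by_contra hne
  have hlt : 2 * t < hammingDist u v := by
    rw [hammingDist_comm, hammingDist_eq_hammingNorm, neg_add_eq_sub]
    exact hC _ huv (sub_ne_zero.2 hne)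
  have hle : hammingDist u v ≤ hammingNorm u + hammingNorm v := by
    simpa using hammingDist_triangle u 0 v
  have := hammingNorm_le_mWtVec u
  have := hammingNorm_le_mWtVec v
  omega

end MannheimWeight

/-- The isomorphism `ℤ/5 ≃ G_{2+i}`, under which `-2` corresponds to `i`. -/
noncomputable def zmodEquivGq : ZMod 5 ≃+* Gq :=
  zmodEquivQuotient (π := ⟨2, 1⟩) isCoprime_one_right (by decide)

instance : Finite Gq := .of_equiv _ zmodEquivGq.toEquiv

instance : IsDomain Gq :=
  have : Fact (Nat.Prime 5) := ⟨by norm_num⟩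
  zmodEquivGq.symm.toMulEquiv.isDomain (ZMod 5)

lemma card_Gq : Nat.card Gq = 5 := by
  rw [← Nat.card_congr zmodEquivGq.toEquiv, Nat.card_zmod]

lemma zmodEquivGq_neg_two : zmodEquivGq (-2) = iq := by
  rw [map_neg, map_ofNat, eq_comm, ← sub_eq_zero, sub_neg_eq_add, add_comm]
  exact Ideal.Quotient.eq_zero_iff_mem.2 (Ideal.mem_span_singleton_self _)

lemma mWt_Gq_le_one (x : Gq) : mWt ⟨2, 1⟩ x ≤ 1 := by
  obtain ⟨y, rfl⟩ := zmodEquivGq.surjective x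
  have hy : ∀ y : ZMod 5, y = 0 ∨ y = 1 ∨ y = -1 ∨ y = -2 ∨ y = - -2 := by decide
  obtain rfl | rfl | rfl | rfl | rfl := hy y
  · simpa using (mWt_mk_le (π := ⟨2, 1⟩) 0).trans zero_le_one
  · simpa using mWt_mk_le (π := ⟨2, 1⟩) 1
  · simpa using mWt_mk_le (π := ⟨2, 1⟩) (-1)
  · rw [zmodEquivGq_neg_two]
    exact mWt_mk_le (π := ⟨2, 1⟩) ⟨0, 1⟩
  · rw [map_neg, zmodEquivGq_neg_two]
    exact mWt_mk_le (π := ⟨2, 1⟩) (-⟨0, 1⟩)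

/-- The parity check matrix with entries in `ℤ/5`, where `i` is read as `-2`. -/
def pcMatrixZMod : Matrix (Fin 2) (Fin 6) (ZMod 5) :=
  !![1, 0, 1, 1, -2, 1; 0, 1, 1, -1, 1, -2]

lemma pcMatrix_eq_map : pcMatrix = pcMatrixZMod.map zmodEquivGq := by
  ext i j
  fin_cases i <;> fin_cases j <;> simp [pcMatrix, pcMatrixZMod, ← zmodEquivGq_neg_two]

lemma det_pcMatrixZMod_submatrix_ne_zero {j k : Fin 6} (hjk : j ≠ k) :
    (pcMatrixZMod.submatrix id ![j, k]).det ≠ 0 := by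
  rw [Matrix.det_fin_two]
  decide +revert

lemma det_pcMatrix_submatrix_ne_zero (e : Fin 2 ↪ Fin 6) : (pcMatrix.submatrix id e).det ≠ 0 := by
  have he : ⇑e = ![e 0, e 1] := by
    ext i
    fin_cases i <;> rfl
  rw [pcMatrix_eq_map, Matrix.submatrix_map, he, ← RingEquiv.mapMatrix_apply, ← RingEquiv.map_det,
    zmodEquivGq.map_ne_zero_iff]
  exact det_pcMatrixZMod_submatrix_ne_zero (e.injective.ne (by decide))

/-- The null space of `H = [[1, 0, 1, 1, i, 1], [0, 1, 1, −1, 1, i]]` over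
`G_{2+i}` is a perfect `(6, 4)` linear code correcting all errors of Mannheim
weight 1: it has `5⁴` elements and index `5² = 25`, there are exactly
`4·6 + 1 = 25` vectors of `G_{2+i}⁶` of Mannheim weight at most 1 and they lie
in pairwise distinct cosets of the code, and the sphere-packing bound
`5^(6−4) = 4·6 + 1` is attained with equality. -/
theorem perfect_code_six_four :
    Nat.card nullCode = 5 ^ 4 ∧
    nullCode.index = 5 ^ 2 ∧
    Nat.card {v : Fin 6 → Gq // mWtVec (⟨2, 1⟩ : GaussianInt) v ≤ 1} = 4 * 6 + 1 ∧
    CorrectsM (⟨2, 1⟩ : GaussianInt) nullCode 1 ∧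
    5 ^ (6 - 4) = 4 * 6 + 1 := by
  classical
  have hcorrects : CorrectsM ⟨2, 1⟩ nullCode 1 :=
    correctsM_of_two_mul_lt_hammingNorm fun _ hv ↦
      card_lt_hammingNorm_of_mulVec_eq_zero (by simp) det_pcMatrix_submatrix_ne_zero hv
  have hball : Nat.card {v : Fin 6 → Gq // mWtVec ⟨2, 1⟩ v ≤ 1} = 4 * 6 + 1 := by
    simp [mWtVec_eq_hammingNorm mWt_Gq_le_one, card_hammingNorm_le, card_Gq, Finset.sum_range_succ]
  have hindex : nullCode.index = 5 ^ 2 := by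
    refine le_antisymm ?_ (hball.symm.trans_le hcorrects.card_ball_le_index)
    calc nullCode.index ≤ Nat.card (Fin 2 → Gq) := index_ker_le_card _
      _ = 5 ^ 2 := by rw [Nat.card_fun, card_Gq, Nat.card_fin]
  have hcard : Nat.card nullCode * 5 ^ 2 = 5 ^ 6 := by
    rw [← hindex, nullCode.card_mul_index, Nat.card_fun, card_Gq, Nat.card_fin]
  exact ⟨by omega, hindex, hball, hcorrects, by norm_num⟩
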